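/- Suppose (d+1)/2 ≤ α ≤ d − m (and α < d). Then for every β with 0 < β < α − 1 there exists a constant C_β such that for every μ ∈ M_d and every R > 1, ∫_{B^{d−1}(0,1)} |μ̂(R(ξ, ⟨Mξ,ξ⟩))|² √(1+4|ξ|²) dξ ≤ C_β · R^{−β} · I_α(μ). (Equivalently, β(α, H_m^{d−1}) ≥ α − 1 on this range.) -/

import Mathlib

open MeasureTheory Metric
open scoped ENNReal NNReal

noncomputable section

/-- The quadratic form `⟨Mξ, ξ⟩` on `ℝ^{d-1}`, where the diagonal matrix `M` has its first
`d-1-m` diagonal entries equal to `+1` and its last `m` diagonal entries equal to `-1`. -/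
def hypQ (d m : ℕ) (ξ : EuclideanSpace ℝ (Fin (d - 1))) : ℝ :=
  ∑ i : Fin (d - 1), (if (i : ℕ) < d - 1 - m then (1 : ℝ) else -1) * ξ i ^ 2

/-- The point `(ξ, ⟨Mξ, ξ⟩) ∈ ℝ^d` on the hyperbolic paraboloid. -/
def hypLift (d m : ℕ) (ξ : EuclideanSpace ℝ (Fin (d - 1))) : EuclideanSpace ℝ (Fin d) :=
  (EuclideanSpace.equiv (Fin d) ℝ).symm
    (fun i => if h : (i : ℕ) < d - 1 then ξ ⟨i, h⟩ else hypQ d m ξ)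

/-- The Fourier transform `μ̂(ζ) = ∫ e^{-i x·ζ} dμ(x)` of a measure on `ℝ^d`. -/
def ftM {d : ℕ} (μ : Measure (EuclideanSpace ℝ (Fin d))) (ζ : EuclideanSpace ℝ (Fin d)) : ℂ :=
  ∫ x, Complex.exp (-(Complex.I * (((∑ i, x i * ζ i) : ℝ) : ℂ))) ∂μ

/-- The `α`-dimensional energy `I_α(μ) = ∬ |x-y|^{-α} dμ(x) dμ(y)`. -/
def energy {d : ℕ} (α : ℝ) (μ : Measure (EuclideanSpace ℝ (Fin d))) : ℝ≥0∞ :=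
  ∫⁻ x, ∫⁻ y, ENNReal.ofReal (dist x y) ^ (-α) ∂μ ∂μ

/-- The hyperbolic average `∫_{B^{d-1}(0,1)} |μ̂(R(ξ,⟨Mξ,ξ⟩))|² √(1+4|ξ|²) dξ`. -/
def hypAvg (d m : ℕ) (μ : Measure (EuclideanSpace ℝ (Fin d))) (R : ℝ) : ℝ :=
  ∫ ξ in ball (0 : EuclideanSpace ℝ (Fin (d - 1))) 1,
    ‖ftM μ (R • hypLift d m ξ)‖ ^ 2 * Real.sqrt (1 + 4 * ‖ξ‖ ^ 2)

/-- The decay estimate `∫_H |μ̂(Rξ)|² dσ(ξ) ≤ C R^{-β} I_α(μ)` holds with some constant `C`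
uniformly over measures in `M_d` and all `R > 1`. -/
def decayBound (d m : ℕ) (α β : ℝ) : Prop :=
  ∃ C : ℝ, 0 < C ∧ ∀ μ : Measure (EuclideanSpace ℝ (Fin d)), IsFiniteMeasure μ →
    μ ((closedBall 0 1)ᶜ) = 0 → ∀ R : ℝ, 1 < R →
    ENNReal.ofReal (hypAvg d m μ R) ≤ ENNReal.ofReal (C * R ^ (-β)) * energy α μ

/-- The decay estimate with exponent `β` fails for every constant `C > 0`: there is a measure
in `M_d` with finite positive `α`-energy and an `R > 1` violating the estimate. -/
def decayFails (d m : ℕ) (α β : ℝ) : Prop :=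
  ∀ C : ℝ, 0 < C → ∃ μ : Measure (EuclideanSpace ℝ (Fin d)), IsFiniteMeasure μ ∧
    μ ((closedBall 0 1)ᶜ) = 0 ∧ 0 < energy α μ ∧ energy α μ ≠ ⊤ ∧
    ∃ R : ℝ, 1 < R ∧ C * R ^ (-β) * (energy α μ).toReal < hypAvg d m μ R

/-!
Multiplying `μ` by a Gaussian weight, which is comparable to `1` on the unit ball, gives a measure
`ν` such that `μ̂` is an average of translates of `ν̂` against a Gaussian at unit scale. By
Jensen's inequality, `∫ |μ̂(Rζ)|² dσ(ζ)` is at most the integral of `|ν̂|²` against the unit-scale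
Gaussian smoothing of the `R`-dilate of `σ`. If `σ` is a bounded surface measure of dimension `k` in
`ℝⁿ`, in the sense that `σ(B(x, r)) ≲ r^k`, this smoothing is dominated by `R^(n-k)` times a
Gaussian probability density at scale `R`. The average of `|ν̂|²` against the latter equals
`∬ exp (-2R²|x-y|²) dν(x) dν(y)`, which is at most a constant times `R^(-α) I_α(ν)`. For a
hypersurface `n - k = 1`, whence the exponent `α - 1`.
-/

lemma sq_rpow_half {R : ℝ} (hR : 0 ≤ R) (p : ℝ) : (R ^ 2) ^ (p / 2) = R ^ p := by
  rw [← Real.rpow_natCast_mul hR, Nat.cast_ofNat, mul_div_cancel₀ p two_ne_zero]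

lemma norm_sq_div_sq_le {E : Type*} [SeminormedAddCommGroup E] [NormedSpace ℝ E] {ρ R : ℝ}
    (hR : 1 ≤ R) {t : E} (ht : ‖t‖ ≤ ρ) (η : E) :
    ‖η‖ ^ 2 / R ^ 2 ≤ 2 * ‖η - R • t‖ ^ 2 + 2 * ρ ^ 2 := by
  have R_pos : 0 < R := by linarith
  have triangle : ‖η‖ ≤ ‖η - R • t‖ + R * ρ := by
    calc ‖η‖ ≤ ‖η - R • t‖ + ‖R • t‖ := norm_le_norm_sub_add η (R • t)
      _ ≤ ‖η - R • t‖ + R * ρ := by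
        rw [norm_smul, Real.norm_of_nonneg R_pos.le]
        gcongr
  rw [div_le_iff₀ (by positivity)]
  calc ‖η‖ ^ 2 ≤ (‖η - R • t‖ + R * ρ) ^ 2 := by gcongr
    _ ≤ 2 * ‖η - R • t‖ ^ 2 * 1 + 2 * (R * ρ) ^ 2 := by
      linarith [add_sq_le (a := ‖η - R • t‖) (b := R * ρ)]
    _ ≤ 2 * ‖η - R • t‖ ^ 2 * R ^ 2 + 2 * (R * ρ) ^ 2 := by
      gcongr
      exact one_le_pow₀ hR
    _ = (2 * ‖η - R • t‖ ^ 2 + 2 * ρ ^ 2) * R ^ 2 := by ring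

section Gaussian

variable {V : Type*} [NormedAddCommGroup V] [InnerProductSpace ℝ V] {b : ℝ}

/-- The density of the centred Gaussian probability measure with covariance `(2b)⁻¹ • 1`, for
`0 < b`. The parameter is the coefficient `b` of the exponent, not the variance, since it is `b`
that enters the Gaussian integrals of Mathlib. -/
def gaussianDensity (b : ℝ) (v : V) : ℝ :=
  (b / Real.pi) ^ (Module.finrank ℝ V / 2 : ℝ) * Real.exp (-b * ‖v‖ ^ 2)

lemma gaussianDensity_nonneg (hb : 0 ≤ b) (v : V) : 0 ≤ gaussianDensity b v := by
  unfold gaussianDensity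
  positivity

@[fun_prop]
lemma continuous_gaussianDensity : Continuous (gaussianDensity b : V → ℝ) := by
  unfold gaussianDensity
  fun_prop

lemma gaussianDensity_sub_smul_le {ρ R : ℝ} (hR : 1 ≤ R) {t : V} (ht : ‖t‖ ≤ ρ) (η : V) :
    gaussianDensity (1 / 2) (η - R • t) ≤
      2 ^ Module.finrank ℝ V * Real.exp (ρ ^ 2 / 4) * R ^ (Module.finrank ℝ V : ℝ) *
        gaussianDensity (1 / (8 * R ^ 2)) η * Real.exp (-(R ^ 2 / 4) * dist t (R⁻¹ • η) ^ 2) := by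
  have R_pos : 0 < R := by linarith
  have dist_rescaled : R ^ 2 * dist t (R⁻¹ • η) ^ 2 = ‖η - R • t‖ ^ 2 := by
    rw [← mul_pow, dist_comm, dist_eq_norm, ← abs_of_pos R_pos, ← Real.norm_eq_abs, ← norm_smul,
      Real.norm_of_nonneg R_pos.le, smul_sub, smul_inv_smul₀ R_pos.ne']
  have normalization : (1 / 2 / Real.pi) ^ (Module.finrank ℝ V / 2 : ℝ) =
      2 ^ Module.finrank ℝ V * R ^ (Module.finrank ℝ V : ℝ) *
        (1 / (8 * R ^ 2) / Real.pi) ^ (Module.finrank ℝ V / 2 : ℝ) := by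
    rw [← Real.rpow_natCast 2, ← Real.mul_rpow two_pos.le R_pos.le,
      ← sq_rpow_half (R := 2 * R) (by positivity), ← Real.mul_rpow (by positivity) (by positivity)]
    congr 1
    field_simp
    norm_num
  -- One half of the exponent is kept; the other, weakened using `1 ≤ R`, is the wide Gaussian.
  have exponent_le : -(1 / 2) * ‖η - R • t‖ ^ 2 ≤
      ρ ^ 2 / 4 + -(1 / (8 * R ^ 2)) * ‖η‖ ^ 2 + -(R ^ 2 / 4) * dist t (R⁻¹ • η) ^ 2 := by
    have : 1 / (8 * R ^ 2) * ‖η‖ ^ 2 = ‖η‖ ^ 2 / R ^ 2 / 8 := by field_simp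
    linarith [norm_sq_div_sq_le hR ht η]
  calc gaussianDensity (1 / 2) (η - R • t)
      ≤ (1 / 2 / Real.pi) ^ (Module.finrank ℝ V / 2 : ℝ) * Real.exp
          (ρ ^ 2 / 4 + -(1 / (8 * R ^ 2)) * ‖η‖ ^ 2 + -(R ^ 2 / 4) * dist t (R⁻¹ • η) ^ 2) := by
        unfold gaussianDensity
        gcongr
    _ = _ := by
        rw [gaussianDensity, normalization, Real.exp_add, Real.exp_add]
        ring

variable [FiniteDimensional ℝ V] [MeasurableSpace V] [BorelSpace V]

/-- The centred Gaussian measure with covariance `(2b)⁻¹ • 1`, given by its density so that its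
translates can be compared with wider Gaussians pointwise. -/
def gaussianMeasure (b : ℝ) : Measure V :=
  volume.withDensity fun v => ENNReal.ofReal (gaussianDensity b v)

lemma charFun_gaussianMeasure (hb : 0 < b) (t : V) :
    charFun (gaussianMeasure b) t = (Real.exp (-‖t‖ ^ 2 / (4 * b)) : ℂ) := by
  obtain ⟨c, hc⟩ : ∃ c : ℝ, c = (b / Real.pi) ^ (Module.finrank ℝ V / 2 : ℝ) := ⟨_, rfl⟩
  have normalization : (c : ℂ) * (Real.pi / b : ℂ) ^ (Module.finrank ℝ V / 2 : ℂ) = 1 := by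
    have h : c * (Real.pi / b) ^ (Module.finrank ℝ V / 2 : ℝ) = 1 := by
      rw [hc, ← inv_div, Real.inv_rpow (by positivity)]
      exact inv_mul_cancel₀ (by positivity)
    simpa [Complex.ofReal_cpow (show 0 ≤ Real.pi / b by positivity)] using
      congrArg Complex.ofReal h
  rw [charFun_apply, gaussianMeasure,
    integral_withDensity_eq_integral_toReal_smul (by fun_prop) (by simp)]
  calc ∫ v : V, (ENNReal.ofReal (gaussianDensity b v)).toReal •
        Complex.exp ((inner ℝ v t : ℝ) * Complex.I)
      = ∫ v : V, (c : ℂ) *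
          Complex.exp (-b * ‖v‖ ^ 2 + Complex.I * (inner ℝ t v : ℝ)) := by
        congr 1 with v
        rw [ENNReal.toReal_ofReal (gaussianDensity_nonneg hb.le v), real_inner_comm,
          gaussianDensity, ← hc, Complex.real_smul, Complex.exp_add]
        push_cast
        ring_nf
    _ = Real.exp (-‖t‖ ^ 2 / (4 * b)) := by
        rw [integral_const_mul, GaussianFourier.integral_cexp_neg_mul_sq_norm_add (by simpa),
          ← mul_assoc, normalization, Complex.I_sq]
        push_cast
        ring_nf

lemma isProbabilityMeasure_gaussianMeasure (hb : 0 < b) :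
    IsProbabilityMeasure (gaussianMeasure b : Measure V) := by
  have total_mass : (gaussianMeasure b : Measure V).real Set.univ = 1 := by
    simpa [charFun_zero] using charFun_gaussianMeasure hb (0 : V)
  exact ⟨(ENNReal.toReal_eq_one_iff _).1 total_mass⟩

lemma integral_cexp_inner_mul_charFun (μ ν : Measure V) [IsFiniteMeasure μ] [IsFiniteMeasure ν]
    (t : V) : ∫ x, Complex.exp ((inner ℝ x t : ℝ) * Complex.I) * charFun ν x ∂μ =
      ∫ s, charFun μ (t + s) ∂ν := by
  simp_rw [charFun_apply, ← integral_const_mul]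
  rw [integral_integral_swap]
  · congr 1 with s
    congr 1 with x
    rw [← Complex.exp_add, inner_add_right, real_inner_comm s x]
    push_cast
    ring_nf
  · refine Integrable.of_bound (C := 1) ?_ (.of_forall fun p => ?_)
    · exact Continuous.aestronglyMeasurable (by fun_prop)
    · simp only [Function.uncurry_def, norm_mul, Complex.norm_exp_ofReal_mul_I, mul_one, le_refl]

lemma charFun_withDensity_exp_neg_norm_sq (hb : 0 < b) (μ : Measure V) [IsFiniteMeasure μ]
    (t : V) :
    charFun (μ.withDensity fun x => ENNReal.ofReal (Real.exp (-‖x‖ ^ 2 / (4 * b)))) t =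
      ∫ s, charFun μ (t + s) ∂gaussianMeasure b := by
  have := isProbabilityMeasure_gaussianMeasure (V := V) hb
  rw [← integral_cexp_inner_mul_charFun, charFun_apply,
    integral_withDensity_eq_integral_toReal_smul (by fun_prop) (by simp)]
  congr 1 with x
  rw [charFun_gaussianMeasure hb, ENNReal.toReal_ofReal (Real.exp_pos _).le, Complex.real_smul,
    mul_comm]

lemma enorm_integral_sq_le_lintegral_enorm_sq {Ω E : Type*} [MeasurableSpace Ω]
    [NormedAddCommGroup E] [NormedSpace ℝ E] {P : Measure Ω} [IsProbabilityMeasure P] {f : Ω → E}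
    (hf : AEStronglyMeasurable f P) : ‖∫ ω, f ω ∂P‖ₑ ^ 2 ≤ ∫⁻ ω, ‖f ω‖ₑ ^ 2 ∂P := by
  calc ‖∫ ω, f ω ∂P‖ₑ ^ 2 ≤ eLpNorm f 1 P ^ 2 := by
        rw [eLpNorm_one_eq_lintegral_enorm]
        gcongr
        exact enorm_integral_le_lintegral_enorm f
    _ ≤ eLpNorm f 2 P ^ 2 := by
        gcongr
        exact eLpNorm_le_eLpNorm_of_exponent_le one_le_two hf
    _ = ∫⁻ ω, ‖f ω‖ₑ ^ 2 ∂P := by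
        simpa using eLpNorm_nnreal_pow_eq_lintegral (μ := P) (f := f) (two_ne_zero (α := ℝ≥0))

lemma enorm_charFun_withDensity_sq_le (hb : 0 < b) (μ : Measure V) [IsFiniteMeasure μ] (t : V) :
    ‖charFun (μ.withDensity fun x => ENNReal.ofReal (Real.exp (-‖x‖ ^ 2 / (4 * b)))) t‖ₑ ^ 2 ≤
      ∫⁻ s, ‖charFun μ (t + s)‖ₑ ^ 2 ∂gaussianMeasure b := by
  have := isProbabilityMeasure_gaussianMeasure (V := V) hb
  rw [charFun_withDensity_exp_neg_norm_sq hb]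
  exact enorm_integral_sq_le_lintegral_enorm_sq
    (stronglyMeasurable_charFun.comp_measurable (measurable_const_add t)).aestronglyMeasurable

lemma charFun_conv_map_neg (μ : Measure V) [IsFiniteMeasure μ] (t : V) :
    charFun (μ ∗ μ.map (fun x => -x)) t = ((‖charFun μ t‖ ^ 2 : ℝ) : ℂ) := by
  have charFun_map_neg : charFun (μ.map fun x => -x) t = charFun μ (-t) := by
    simpa using charFun_map_smul (μ := μ) (-1) t
  rw [charFun_conv, charFun_map_neg, charFun_neg, Complex.mul_conj, Complex.normSq_eq_norm_sq]

lemma integral_norm_charFun_sq_gaussianMeasure (hb : 0 < b) (μ : Measure V) [IsFiniteMeasure μ] :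
    ∫ s, ‖charFun μ s‖ ^ 2 ∂gaussianMeasure b =
      ∫ z, Real.exp (-‖z‖ ^ 2 / (4 * b)) ∂(μ ∗ μ.map (fun x => -x)) := by
  have := isProbabilityMeasure_gaussianMeasure (V := V) hb
  have duality := integral_cexp_inner_mul_charFun (μ ∗ μ.map (fun x => -x)) (gaussianMeasure b) 0
  simp only [inner_zero_right, Complex.ofReal_zero, zero_mul, Complex.exp_zero, one_mul,
    zero_add, charFun_gaussianMeasure hb, charFun_conv_map_neg, integral_complex_ofReal]
    at duality
  exact_mod_cast duality.symm

lemma lintegral_enorm_charFun_sq_gaussianMeasure (hb : 0 < b) (μ : Measure V)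
    [IsFiniteMeasure μ] :
    ∫⁻ s, ‖charFun μ s‖ₑ ^ 2 ∂gaussianMeasure b =
      ∫⁻ x, ∫⁻ y, ENNReal.ofReal (Real.exp (-(1 / (4 * b)) * dist x y ^ 2)) ∂μ ∂μ := by
  have := isProbabilityMeasure_gaussianMeasure (V := V) hb
  have integrable_charFun_sq : Integrable (fun s => ‖charFun μ s‖ ^ 2) (gaussianMeasure b) := by
    refine Integrable.of_bound (C := μ.real Set.univ ^ 2)
      (stronglyMeasurable_charFun.norm.pow 2).aestronglyMeasurable (.of_forall fun s => ?_)
    rw [norm_pow, norm_norm]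
    gcongr
    exact norm_charFun_le s
  have integrable_exp :
      Integrable (fun z => Real.exp (-‖z‖ ^ 2 / (4 * b))) (μ ∗ μ.map (fun x => -x)) := by
    refine Integrable.of_bound (C := 1) (Continuous.aestronglyMeasurable (by fun_prop))
      (.of_forall fun z => ?_)
    rw [Real.norm_of_nonneg (Real.exp_pos _).le, Real.exp_le_one_iff, neg_div]
    exact neg_nonpos.2 (by positivity)
  calc ∫⁻ s, ‖charFun μ s‖ₑ ^ 2 ∂gaussianMeasure b
      = ENNReal.ofReal (∫ s, ‖charFun μ s‖ ^ 2 ∂gaussianMeasure b) := by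
        rw [ofReal_integral_eq_lintegral_ofReal integrable_charFun_sq
          (.of_forall fun _ => by positivity)]
        simp_rw [ENNReal.ofReal_pow (norm_nonneg _), ofReal_norm]
    _ = ∫⁻ z, ENNReal.ofReal (Real.exp (-‖z‖ ^ 2 / (4 * b))) ∂(μ ∗ μ.map (fun x => -x)) := by
        rw [integral_norm_charFun_sq_gaussianMeasure hb,
          ofReal_integral_eq_lintegral_ofReal integrable_exp
            (.of_forall fun _ => (Real.exp_pos _).le)]
    _ = _ := by
        rw [Measure.lintegral_conv (by fun_prop)]
        congr 1 with x
        rw [lintegral_map (by fun_prop) measurable_neg]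
        congr 1 with y
        rw [dist_eq_norm, sub_eq_add_neg, neg_mul, one_div_mul_eq_div, neg_div]

lemma lintegral_add_left_gaussianMeasure {F : V → ℝ≥0∞} (hF : Measurable F) (v : V) :
    ∫⁻ s, F (v + s) ∂gaussianMeasure b =
      ∫⁻ η, ENNReal.ofReal (gaussianDensity b (η - v)) * F η := by
  rw [gaussianMeasure, lintegral_withDensity_eq_lintegral_mul₀ (by fun_prop) (by fun_prop),
    ← lintegral_add_left_eq_self (fun η => ENNReal.ofReal (gaussianDensity b (η - v)) * F η) v]
  simp only [Pi.mul_apply, add_sub_cancel_left]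

lemma exists_le_smul_forall_enorm_charFun_sq_le (hb : 0 < b) (r : ℝ) :
    ∃ c : ℝ≥0, ∀ μ : Measure V, IsFiniteMeasure μ → (∀ᵐ x ∂μ, ‖x‖ ≤ r) → ∃ ν ≤ c • μ, ∀ t,
      ‖charFun μ t‖ₑ ^ 2 ≤ ∫⁻ s, ‖charFun ν (t + s)‖ₑ ^ 2 ∂gaussianMeasure b := by
  refine ⟨(Real.exp (r ^ 2 / (4 * b))).toNNReal, fun μ _ hμ => ?_⟩
  set w : V → ℝ≥0∞ := fun x => ENNReal.ofReal (Real.exp (‖x‖ ^ 2 / (4 * b))) with hw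
  have inv_weight :
      (fun x => ENNReal.ofReal (Real.exp (-‖x‖ ^ 2 / (4 * b)))) = fun x => (w x)⁻¹ := by
    ext x
    rw [hw, ← ENNReal.ofReal_inv_of_pos (Real.exp_pos _), ← Real.exp_neg, neg_div]
  have weight_le : μ.withDensity w ≤ (Real.exp (r ^ 2 / (4 * b))).toNNReal • μ := by
    rw [ENNReal.smul_def, ← withDensity_const]
    refine withDensity_mono (hμ.mono fun x hx => ?_)
    change ENNReal.ofReal _ ≤ ENNReal.ofReal _
    gcongr
  have := isFiniteMeasure_of_le _ weight_le
  refine ⟨μ.withDensity w, weight_le, fun t => ?_⟩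
  have smoothing := enorm_charFun_withDensity_sq_le hb (μ.withDensity w) t
  rwa [inv_weight, withDensity_inv_same (by fun_prop) (by simp [hw, Real.exp_pos])
    (by simp [hw])] at smoothing

end Gaussian

section Frostman

/-- The Frostman growth condition `σ(B(x, r)) ≤ A r^k` on all balls: `σ` is at most
`k`-dimensional in the sense in which surface measure on a `k`-dimensional surface is. -/
def UpperRegular {X : Type*} [PseudoMetricSpace X] [MeasurableSpace X] (σ : Measure X) (k : ℝ)
    (A : ℝ≥0) : Prop :=
  ∀ (x : X) (r : ℝ), 0 < r → σ (ball x r) ≤ A * ENNReal.ofReal (r ^ k)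

lemma lintegral_Ioo_rpow_neg_half :
    ∫⁻ t in Set.Ioo (0 : ℝ) 1, ENNReal.ofReal (t ^ (-(1 / 2) : ℝ)) = 2 := by
  rw [← ofReal_integral_eq_lintegral_ofReal, ← integral_Ioc_eq_integral_Ioo,
    ← intervalIntegral.integral_of_le zero_le_one, integral_rpow (by norm_num)]
  · norm_num
  · rw [← IntegrableOn, intervalIntegral.integrableOn_Ioo_rpow_iff zero_lt_one]
    norm_num
  · filter_upwards [ae_restrict_mem measurableSet_Ioo] with t ht
    exact Real.rpow_nonneg ht.1.le _

namespace UpperRegular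

variable {X : Type*} [PseudoMetricSpace X] [MeasurableSpace X] {σ : Measure X} {k : ℝ} {A : ℝ≥0}

lemma measure_lt_exp_neg_mul_sq_dist_le (hσ : UpperRegular σ k A) (hk : 0 ≤ k) {s t : ℝ}
    (hs : 0 < s) (ht : t ∈ Set.Ioo (0 : ℝ) 1) (x : X) :
    σ {z | t < Real.exp (-s * dist z x ^ 2)} ≤
      A * ENNReal.ofReal ((k / s) ^ (k / 2)) * ENNReal.ofReal (t ^ (-(1 / 2) : ℝ)) := by
  set u := -Real.log t / s with hu
  have u_pos : 0 < u := div_pos (neg_pos.2 (Real.log_neg ht.1 ht.2)) hs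
  have superlevel_subset : {z | t < Real.exp (-s * dist z x ^ 2)} ⊆ ball x (√u) := by
    intro z hz
    rw [Set.mem_ofPred_eq, ← Real.log_lt_iff_lt_exp ht.1] at hz
    rw [mem_ball, Real.lt_sqrt dist_nonneg, hu, lt_div_iff₀ hs]
    linarith
  have radius_bound : √u ^ k ≤ (k / s) ^ (k / 2) * t ^ (-(1 / 2) : ℝ) := by
    have h := ProbabilityTheory.rpow_abs_le_mul_exp_abs u (t := s / 2) (p := k / 2)
      (by positivity) (by positivity)
    rw [abs_of_pos u_pos, abs_of_pos (by positivity), div_div_div_cancel_right₀ two_ne_zero] at h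
    rw [Real.sqrt_eq_rpow, ← Real.rpow_mul u_pos.le, Real.rpow_def_of_pos ht.1]
    convert h using 3
    · ring
    · rw [hu]
      field_simp
  calc σ {z | t < Real.exp (-s * dist z x ^ 2)} ≤ σ (ball x (√u)) := measure_mono superlevel_subset
    _ ≤ A * ENNReal.ofReal (√u ^ k) := hσ x _ (Real.sqrt_pos.2 u_pos)
    _ ≤ A * (ENNReal.ofReal ((k / s) ^ (k / 2)) * ENNReal.ofReal (t ^ (-(1 / 2) : ℝ))) := by
        rw [← ENNReal.ofReal_mul (by positivity)]
        gcongr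
    _ = _ := (mul_assoc _ _ _).symm

lemma lintegral_exp_neg_mul_sq_dist_le [OpensMeasurableSpace X] (hσ : UpperRegular σ k A)
    (hk : 0 ≤ k) {s : ℝ} (hs : 0 < s) (x : X) :
    ∫⁻ z, ENNReal.ofReal (Real.exp (-s * dist z x ^ 2)) ∂σ ≤
      2 * A * ENNReal.ofReal ((k / s) ^ (k / 2)) := by
  rw [lintegral_eq_lintegral_meas_lt σ (.of_forall fun _ => (Real.exp_pos _).le)
    (Continuous.measurable (by fun_prop)).aemeasurable]
  set c := A * ENNReal.ofReal ((k / s) ^ (k / 2)) with hc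
  have superlevel_empty {t : ℝ} (ht : 1 ≤ t) : {z | t < Real.exp (-s * dist z x ^ 2)} = ∅ := by
    refine Set.eq_empty_of_forall_notMem fun z hz => ?_
    have : Real.exp (-s * dist z x ^ 2) ≤ 1 := by
      rw [Real.exp_le_one_iff, neg_mul]
      exact neg_nonpos.2 (by positivity)
    exact (hz.trans_le this).not_ge ht
  calc ∫⁻ t in Set.Ioi 0, σ {z | t < Real.exp (-s * dist z x ^ 2)}
      = ∫⁻ t in Set.Ioo 0 1, σ {z | t < Real.exp (-s * dist z x ^ 2)} := by
        rw [← Set.Ioo_union_Ici_eq_Ioi zero_lt_one, lintegral_union measurableSet_Ici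
          (Set.disjoint_left.2 fun t ht => not_le.2 ht.2), setLIntegral_eq_zero measurableSet_Ici
          fun t ht => ?_, add_zero]
        rw [superlevel_empty ht, measure_empty, Pi.zero_apply]
    _ ≤ ∫⁻ t in Set.Ioo 0 1, c * ENNReal.ofReal (t ^ (-(1 / 2) : ℝ)) :=
        setLIntegral_mono' measurableSet_Ioo fun t ht =>
          hσ.measure_lt_exp_neg_mul_sq_dist_le hk hs ht x
    _ = 2 * A * ENNReal.ofReal ((k / s) ^ (k / 2)) := by
        rw [lintegral_const_mul' _ _ (by finiteness), lintegral_Ioo_rpow_neg_half, hc]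
        ring

lemma of_le_smul {τ : Measure X} {c : ℝ≥0} (hτ : UpperRegular τ k A) (h : σ ≤ c • τ) :
    UpperRegular σ k (c * A) := fun x r hr => by
  calc σ (ball x r) ≤ c * τ (ball x r) := h _
    _ ≤ c * (A * ENNReal.ofReal (r ^ k)) := by
        gcongr
        exact hτ x r hr
    _ = _ := by rw [ENNReal.coe_mul, mul_assoc]

end UpperRegular

lemma exists_upperRegular_map_of_antilipschitzWith {E X : Type*} [NormedAddCommGroup E]
    [NormedSpace ℝ E] [FiniteDimensional ℝ E] [MeasurableSpace E] [BorelSpace E]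
    [PseudoMetricSpace X] [MeasurableSpace X] [OpensMeasurableSpace X] {f : E → X} {K : ℝ≥0}
    (hf : AntilipschitzWith K f) (hf_meas : Measurable f) (μ : Measure E) [μ.IsAddHaarMeasure] :
    ∃ A, UpperRegular (μ.map f) (Module.finrank ℝ E) A := by
  refine ⟨(2 * K) ^ Module.finrank ℝ E * (μ (ball 0 1)).toNNReal, fun x r hr => ?_⟩
  rw [Measure.map_apply hf_meas measurableSet_ball]
  rcases (f ⁻¹' ball x r).eq_empty_or_nonempty with empty | ⟨ξ₀, hξ₀⟩
  · simp [empty]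
  have preimage_subset : f ⁻¹' ball x r ⊆ closedBall ξ₀ (2 * K * r) := fun ξ hξ => by
    rw [mem_closedBall]
    calc dist ξ ξ₀ ≤ K * dist (f ξ) (f ξ₀) := hf.le_mul_dist ξ ξ₀
      _ ≤ K * (r + r) := by
          gcongr
          exact (dist_triangle_right _ _ x).trans (add_le_add hξ.le hξ₀.le)
      _ = 2 * K * r := by ring
  calc μ (f ⁻¹' ball x r) ≤ μ (closedBall ξ₀ (2 * K * r)) := measure_mono preimage_subset
    _ = ENNReal.ofReal ((2 * K * r) ^ Module.finrank ℝ E) * μ (ball 0 1) :=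
        Measure.addHaar_closedBall μ ξ₀ (by positivity)
    _ = _ := by
        rw [mul_pow, ENNReal.ofReal_mul (by positivity), Real.rpow_natCast, ENNReal.coe_mul,
          ENNReal.coe_toNNReal measure_ball_lt_top.ne, mul_right_comm,
          ← ENNReal.ofReal_coe_nnreal (p := (2 * K) ^ Module.finrank ℝ E)]
        push_cast
        rfl

end Frostman

section Smoothing

variable {V : Type*} [NormedAddCommGroup V] [InnerProductSpace ℝ V] [FiniteDimensional ℝ V]
  [MeasurableSpace V] [BorelSpace V] {σ : Measure V} {k ρ : ℝ} {A : ℝ≥0}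

lemma exists_lintegral_gaussianDensity_sub_smul_le (hσ : UpperRegular σ k A) (hk : 0 ≤ k)
    (hρ : ∀ᵐ t ∂σ, ‖t‖ ≤ ρ) :
    ∃ C : ℝ≥0, ∀ R : ℝ, 1 ≤ R → ∀ η,
      ∫⁻ t, ENNReal.ofReal (gaussianDensity (1 / 2) (η - R • t)) ∂σ ≤
        C * ENNReal.ofReal (R ^ (Module.finrank ℝ V - k)) *
          ENNReal.ofReal (gaussianDensity (1 / (8 * R ^ 2)) η) := by
  set B : ℝ := 2 ^ Module.finrank ℝ V * Real.exp (ρ ^ 2 / 4)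
  refine ⟨2 * A * (B * (4 * k) ^ (k / 2)).toNNReal, fun R hR η => ?_⟩
  have R_pos : 0 < R := by linarith
  set g := gaussianDensity (1 / (8 * R ^ 2)) η
  have g_nonneg : 0 ≤ g := gaussianDensity_nonneg (by positivity) η
  have scaling : (k / (R ^ 2 / 4)) ^ (k / 2) = (4 * k) ^ (k / 2) * R ^ (-k) := by
    rw [Real.rpow_neg R_pos.le, ← sq_rpow_half R_pos.le, ← Real.inv_rpow (by positivity),
      ← Real.mul_rpow (by positivity) (by positivity)]
    congr 1
    field_simp
  calc ∫⁻ t, ENNReal.ofReal (gaussianDensity (1 / 2) (η - R • t)) ∂σ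
      ≤ ∫⁻ t, ENNReal.ofReal (B * R ^ (Module.finrank ℝ V : ℝ) * g) *
          ENNReal.ofReal (Real.exp (-(R ^ 2 / 4) * dist t (R⁻¹ • η) ^ 2)) ∂σ := by
        refine lintegral_mono_ae (hρ.mono fun t ht => ?_)
        rw [← ENNReal.ofReal_mul (by positivity)]
        exact ENNReal.ofReal_le_ofReal (gaussianDensity_sub_smul_le hR ht η)
    _ ≤ ENNReal.ofReal (B * R ^ (Module.finrank ℝ V : ℝ) * g) *
          (2 * A * ENNReal.ofReal ((k / (R ^ 2 / 4)) ^ (k / 2))) := by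
        rw [lintegral_const_mul _ (by fun_prop)]
        gcongr
        exact hσ.lintegral_exp_neg_mul_sq_dist_le hk (by positivity) _
    _ = 2 * A * ENNReal.ofReal (B * (4 * k) ^ (k / 2) * (R ^ (Module.finrank ℝ V - k)) * g) := by
        rw [mul_left_comm, ← ENNReal.ofReal_mul (by positivity), scaling, sub_eq_add_neg,
          Real.rpow_add R_pos]
        congr 2
        ring
    _ = _ := by
        rw [ENNReal.ofReal_mul (by positivity), ENNReal.ofReal_mul (by positivity),
          ENNReal.coe_mul, ENNReal.coe_mul, ENNReal.coe_ofNat, ← ENNReal.ofReal]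
        ring

lemma exists_lintegral_lintegral_gaussianMeasure_le [SFinite σ] (hσ : UpperRegular σ k A)
    (hk : 0 ≤ k) (hρ : ∀ᵐ t ∂σ, ‖t‖ ≤ ρ) :
    ∃ C : ℝ≥0, ∀ R : ℝ, 1 ≤ R → ∀ F : V → ℝ≥0∞, Measurable F →
      ∫⁻ t, ∫⁻ s, F (R • t + s) ∂gaussianMeasure (1 / 2) ∂σ ≤
        C * ENNReal.ofReal (R ^ (Module.finrank ℝ V - k)) *
          ∫⁻ η, F η ∂gaussianMeasure (1 / (8 * R ^ 2)) := by
  obtain ⟨C, hC⟩ := exists_lintegral_gaussianDensity_sub_smul_le hσ hk hρ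
  refine ⟨C, fun R hR F hF => ?_⟩
  set c := C * ENNReal.ofReal (R ^ (Module.finrank ℝ V - k))
  calc ∫⁻ t, ∫⁻ s, F (R • t + s) ∂gaussianMeasure (1 / 2) ∂σ
      = ∫⁻ η, (∫⁻ t, ENNReal.ofReal (gaussianDensity (1 / 2) (η - R • t)) ∂σ) * F η := by
        simp_rw [lintegral_add_left_gaussianMeasure hF]
        rw [lintegral_lintegral_swap (by fun_prop)]
        congr 1 with η
        rw [lintegral_mul_const _ (by fun_prop)]
    _ ≤ ∫⁻ η, c * (ENNReal.ofReal (gaussianDensity (1 / (8 * R ^ 2)) η) * F η) := by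
        refine lintegral_mono fun η => ?_
        rw [← mul_assoc]
        gcongr
        exact hC R hR η
    _ = c * ∫⁻ η, F η ∂gaussianMeasure (1 / (8 * R ^ 2)) := by
        rw [lintegral_const_mul _ (by fun_prop), gaussianMeasure,
          lintegral_withDensity_eq_lintegral_mul₀ (by fun_prop) (by fun_prop)]
        rfl

end Smoothing

section Energy

variable {d : ℕ} {α : ℝ} {μ ν : Measure (EuclideanSpace ℝ (Fin d))}

lemma energy_le_of_le_smul {c : ℝ≥0} (h : ν ≤ c • μ) : energy α ν ≤ c ^ 2 * energy α μ := by
  calc energy α ν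
      ≤ ∫⁻ x, ∫⁻ y, ENNReal.ofReal (dist x y) ^ (-α) ∂(c • μ) ∂(c • μ) := by
        unfold energy
        gcongr
    _ = c ^ 2 * energy α μ := by
        simp_rw [lintegral_smul_measure, ENNReal.smul_def, smul_eq_mul]
        rw [lintegral_const_mul' _ _ ENNReal.coe_ne_top, ← mul_assoc, ← sq, energy]

lemma ofReal_exp_neg_mul_sq_le {c r : ℝ} (hα : 0 < α) (hc : 0 < c) (hr : 0 ≤ r) :
    ENNReal.ofReal (Real.exp (-c * r ^ 2)) ≤
      ENNReal.ofReal ((α / (2 * c)) ^ (α / 2)) * ENNReal.ofReal r ^ (-α) := by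
  rcases hr.eq_or_lt with rfl | r_pos
  · rw [ENNReal.ofReal_zero, ENNReal.zero_rpow_of_neg (neg_neg_of_pos hα), ENNReal.mul_top]
    · exact le_top
    · exact (ENNReal.ofReal_pos.2 (by positivity)).ne'
  have h := ProbabilityTheory.rpow_abs_le_mul_exp_abs (r ^ 2) (t := c) (p := α / 2)
    (by positivity) hc.ne'
  rw [abs_of_pos hc, abs_of_pos (by positivity), div_div, sq_rpow_half hr] at h
  rw [ENNReal.ofReal_rpow_of_pos r_pos, ← ENNReal.ofReal_mul (by positivity), neg_mul,
    Real.exp_neg, Real.rpow_neg hr, ← div_eq_mul_inv]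
  refine ENNReal.ofReal_le_ofReal ?_
  rw [inv_le_iff_one_le_mul₀ (Real.exp_pos _), div_mul_eq_mul_div, one_le_div₀ (by positivity)]
  exact h

lemma lintegral_lintegral_exp_neg_mul_sq_dist_le {c : ℝ} (hα : 0 < α) (hc : 0 < c) :
    ∫⁻ x, ∫⁻ y, ENNReal.ofReal (Real.exp (-c * dist x y ^ 2)) ∂μ ∂μ ≤
      ENNReal.ofReal ((α / (2 * c)) ^ (α / 2)) * energy α μ := by
  rw [energy, ← lintegral_const_mul' _ _ (by finiteness)]
  gcongr with x
  rw [← lintegral_const_mul' _ _ (by finiteness)]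
  gcongr with y
  exact ofReal_exp_neg_mul_sq_le hα hc dist_nonneg

lemma lintegral_enorm_charFun_sq_gaussianMeasure_le [IsFiniteMeasure μ] {R : ℝ} (hα : 0 < α)
    (R_pos : 0 < R) :
    ∫⁻ η, ‖charFun μ η‖ₑ ^ 2 ∂gaussianMeasure (1 / (8 * R ^ 2)) ≤
      ENNReal.ofReal ((α / 4) ^ (α / 2) * R ^ (-α)) * energy α μ := by
  have scaling : (α / (2 * (1 / (4 * (1 / (8 * R ^ 2)))))) ^ (α / 2) =
      (α / 4) ^ (α / 2) * R ^ (-α) := by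
    rw [Real.rpow_neg R_pos.le, ← sq_rpow_half R_pos.le, ← Real.inv_rpow (by positivity),
      ← Real.mul_rpow (by positivity) (by positivity)]
    congr 1
    field_simp
    norm_num
  rw [lintegral_enorm_charFun_sq_gaussianMeasure (by positivity), ← scaling]
  exact lintegral_lintegral_exp_neg_mul_sq_dist_le hα (by positivity)

lemma exists_lintegral_enorm_charFun_sq_le {σ : Measure (EuclideanSpace ℝ (Fin d))} [SFinite σ]
    {k ρ : ℝ} {A : ℝ≥0} (hσ : UpperRegular σ k A) (hk : 0 ≤ k) (hρ : ∀ᵐ t ∂σ, ‖t‖ ≤ ρ)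
    (hα : 0 < α) (r : ℝ) :
    ∃ C : ℝ≥0, ∀ μ : Measure (EuclideanSpace ℝ (Fin d)), IsFiniteMeasure μ →
      (∀ᵐ x ∂μ, ‖x‖ ≤ r) → ∀ R : ℝ, 1 ≤ R →
        ∫⁻ t, ‖charFun μ (R • t)‖ₑ ^ 2 ∂σ ≤
          C * ENNReal.ofReal (R ^ (d - k - α)) * energy α μ := by
  obtain ⟨C, hC⟩ := exists_lintegral_lintegral_gaussianMeasure_le hσ hk hρ
  obtain ⟨c, hc⟩ := exists_le_smul_forall_enorm_charFun_sq_le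
    (V := EuclideanSpace ℝ (Fin d)) (b := 1 / 2) (by norm_num) r
  refine ⟨C * ((α / 4) ^ (α / 2)).toNNReal * c ^ 2, fun μ _ hμ R hR => ?_⟩
  have R_pos : 0 < R := by linarith
  obtain ⟨ν, ν_le, charFun_le⟩ := hc μ inferInstance hμ
  have := isFiniteMeasure_of_le _ ν_le
  calc ∫⁻ t, ‖charFun μ (R • t)‖ₑ ^ 2 ∂σ
      ≤ ∫⁻ t, ∫⁻ s, ‖charFun ν (R • t + s)‖ₑ ^ 2 ∂gaussianMeasure (1 / 2) ∂σ := by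
        gcongr with t
        exact charFun_le _
    _ ≤ C * ENNReal.ofReal (R ^ (d - k)) *
          ∫⁻ η, ‖charFun ν η‖ₑ ^ 2 ∂gaussianMeasure (1 / (8 * R ^ 2)) := by
        simpa using hC R hR _ (stronglyMeasurable_charFun.enorm.pow_const 2)
    _ ≤ C * ENNReal.ofReal (R ^ (d - k)) *
          (ENNReal.ofReal ((α / 4) ^ (α / 2) * R ^ (-α)) * (c ^ 2 * energy α μ)) := by
        gcongr
        refine (lintegral_enorm_charFun_sq_gaussianMeasure_le hα R_pos).trans ?_
        gcongr
        exact energy_le_of_le_smul ν_le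
    _ = _ := by
        rw [sub_eq_add_neg _ α, Real.rpow_add R_pos, ENNReal.ofReal_mul (by positivity),
          ENNReal.ofReal_mul (by positivity), ENNReal.coe_mul, ENNReal.coe_mul, ← ENNReal.ofReal,
          ENNReal.coe_pow]
        ring

end Energy

section Hyperbolic

variable {d m : ℕ}

lemma hypLift_castLE (ξ : EuclideanSpace ℝ (Fin (d - 1))) (i : Fin (d - 1)) :
    hypLift d m ξ (i.castLE (Nat.sub_le d 1)) = ξ i := by
  simp [hypLift]

@[fun_prop]
lemma continuous_hypLift : Continuous (hypLift d m) := by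
  refine (EuclideanSpace.equiv (Fin d) ℝ).symm.continuous.comp (continuous_pi fun i => ?_)
  split_ifs
  · fun_prop
  · unfold hypQ
    fun_prop

lemma antilipschitzWith_hypLift : AntilipschitzWith 1 (hypLift d m) := by
  refine AntilipschitzWith.of_le_mul_dist fun ξ η => ?_
  rw [NNReal.coe_one, one_mul, EuclideanSpace.dist_eq, EuclideanSpace.dist_eq]
  refine Real.sqrt_le_sqrt ?_
  calc ∑ i, dist (ξ i) (η i) ^ 2
      = ∑ i ∈ Finset.univ.map (Fin.castLEEmb (Nat.sub_le d 1)),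
          dist (hypLift d m ξ i) (hypLift d m η i) ^ 2 := by
        simp [hypLift_castLE]
    _ ≤ ∑ i, dist (hypLift d m ξ i) (hypLift d m η i) ^ 2 :=
        Finset.sum_le_univ_sum_of_nonneg fun _ => sq_nonneg _

/-- The surface measure `σ` of the truncated hyperbolic paraboloid
`H = {(ξ, ⟨Mξ, ξ⟩) : ξ ∈ B(0, 1)}`. -/
def hypMeasure (d m : ℕ) : Measure (EuclideanSpace ℝ (Fin d)) :=
  ((volume.restrict (ball 0 1)).withDensity fun ξ =>
    ENNReal.ofReal (√(1 + 4 * ‖ξ‖ ^ 2))).map (hypLift d m)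

instance sFinite_hypMeasure : SFinite (hypMeasure d m) := by
  unfold hypMeasure
  infer_instance

lemma exists_ae_norm_le_hypMeasure (d m : ℕ) : ∃ ρ, ∀ᵐ ζ ∂hypMeasure d m, ‖ζ‖ ≤ ρ := by
  obtain ⟨ρ, hρ⟩ :=
    (isCompact_closedBall (0 : EuclideanSpace ℝ (Fin (d - 1))) 1).exists_bound_of_continuousOn
      (continuous_hypLift (m := m)).continuousOn
  refine ⟨ρ, ?_⟩
  rw [hypMeasure, ae_map_iff continuous_hypLift.aemeasurable
    (measurableSet_le measurable_norm measurable_const)]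
  refine (withDensity_absolutelyContinuous _ _).ae_le ?_
  filter_upwards [ae_restrict_mem measurableSet_ball] with ξ hξ
  exact hρ ξ (ball_subset_closedBall hξ)

lemma hypMeasure_le : hypMeasure d m ≤ (3 : ℝ≥0) • volume.map (hypLift d m) := by
  rw [hypMeasure, ← Measure.map_smul]
  refine Measure.map_mono ?_ continuous_hypLift.measurable
  calc (volume.restrict (ball 0 1)).withDensity (fun ξ : EuclideanSpace ℝ (Fin (d - 1)) =>
        ENNReal.ofReal (√(1 + 4 * ‖ξ‖ ^ 2)))
      ≤ (volume.restrict (ball 0 1)).withDensity fun _ => 3 := by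
        refine withDensity_mono ?_
        filter_upwards [ae_restrict_mem measurableSet_ball] with ξ hξ
        rw [mem_ball_zero_iff] at hξ
        rw [ENNReal.ofReal_le_ofNat, Real.sqrt_le_left (by norm_num)]
        nlinarith [norm_nonneg ξ]
    _ ≤ (3 : ℝ≥0) • volume := by
        rw [← restrict_withDensity measurableSet_ball, withDensity_const]
        exact Measure.restrict_le_self

lemma exists_upperRegular_hypMeasure (d m : ℕ) :
    ∃ A, UpperRegular (hypMeasure d m) (d - 1 : ℕ) A := by
  obtain ⟨A, hA⟩ := exists_upperRegular_map_of_antilipschitzWith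
    (antilipschitzWith_hypLift (m := m)) continuous_hypLift.measurable volume
  rw [finrank_euclideanSpace_fin] at hA
  exact ⟨_, hA.of_le_smul hypMeasure_le⟩

lemma ftM_eq_charFun_neg (μ : Measure (EuclideanSpace ℝ (Fin d))) (ζ : EuclideanSpace ℝ (Fin d)) :
    ftM μ ζ = charFun μ (-ζ) := by
  rw [ftM, charFun_apply]
  congr 1 with x
  simp [PiLp.inner_apply, mul_comm]

lemma ofReal_hypAvg_le (μ : Measure (EuclideanSpace ℝ (Fin d))) [IsFiniteMeasure μ] (R : ℝ) :
    ENNReal.ofReal (hypAvg d m μ R) ≤ ∫⁻ ζ, ‖charFun μ (R • ζ)‖ₑ ^ 2 ∂hypMeasure d m := by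
  calc ENNReal.ofReal (hypAvg d m μ R)
      ≤ ∫⁻ ξ in ball 0 1, ‖‖ftM μ (R • hypLift d m ξ)‖ ^ 2 * √(1 + 4 * ‖ξ‖ ^ 2)‖ₑ :=
        (Real.ofReal_le_enorm _).trans (enorm_integral_le_lintegral_enorm _)
    _ = ∫⁻ ξ in ball 0 1, ENNReal.ofReal (√(1 + 4 * ‖ξ‖ ^ 2)) *
          ‖charFun μ (R • hypLift d m ξ)‖ₑ ^ 2 := by
        congr 1 with ξ
        rw [enorm_mul, enorm_pow, enorm_norm, Real.enorm_of_nonneg (Real.sqrt_nonneg _),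
          ftM_eq_charFun_neg, charFun_neg, mul_comm]
        simp
    _ = ∫⁻ ζ, ‖charFun μ (R • ζ)‖ₑ ^ 2 ∂hypMeasure d m := by
        rw [hypMeasure, lintegral_map (by fun_prop) continuous_hypLift.measurable,
          lintegral_withDensity_eq_lintegral_mul₀ (by fun_prop) (by fun_prop)]
        rfl

end Hyperbolic

theorem statement6_general (d m : ℕ) (hd : 1 ≤ d) (α β : ℝ) (hα : 0 < α) (hβ : β ≤ α - 1) :
    decayBound d m α β := by
  obtain ⟨A, regular⟩ := exists_upperRegular_hypMeasure d m
  obtain ⟨ρ, bounded⟩ := exists_ae_norm_le_hypMeasure d m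
  obtain ⟨C, hC⟩ :=
    exists_lintegral_enorm_charFun_sq_le regular (Nat.cast_nonneg _) bounded hα 1
  refine ⟨C + 1, by positivity, fun μ _ hμ R hR => ?_⟩
  have support : ∀ᵐ x ∂μ, ‖x‖ ≤ 1 := by
    simpa [ae_iff, closedBall, Set.compl_def] using hμ
  have exponent_le : (d : ℝ) - (d - 1 : ℕ) - α ≤ -β := by
    rw [Nat.cast_sub hd, Nat.cast_one]
    linarith
  calc ENNReal.ofReal (hypAvg d m μ R)
      ≤ ∫⁻ ζ, ‖charFun μ (R • ζ)‖ₑ ^ 2 ∂hypMeasure d m := ofReal_hypAvg_le μ R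
    _ ≤ C * ENNReal.ofReal (R ^ ((d : ℝ) - (d - 1 : ℕ) - α)) * energy α μ :=
        hC μ inferInstance support R hR.le
    _ ≤ ENNReal.ofReal (C + 1) * ENNReal.ofReal (R ^ (-β)) * energy α μ := by
        gcongr
        · rw [← ENNReal.ofReal_coe_nnreal]
          exact ENNReal.ofReal_le_ofReal (by linarith)
        · exact hR.le
    _ = ENNReal.ofReal ((C + 1) * R ^ (-β)) * energy α μ := by
        rw [ENNReal.ofReal_mul (by positivity)]

/-- if `(d+1)/2 <= a <= d - m` (and `a < d`), then for every `0 < b < a - 1`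
the decay estimate holds, i.e. `beta(a, H_m^{d-1}) >= a - 1`. -/
theorem statement6 (d m : ℕ) (hd : 3 ≤ d) (hm1 : 1 ≤ m) (hm2 : 2 * m ≤ d - 1)
    (α : ℝ) (hα1 : ((d : ℝ) + 1) / 2 ≤ α) (hα2 : α ≤ (d : ℝ) - m) (hαd : α < d)
    (β : ℝ) (hβ0 : 0 < β) (hβ : β < α - 1) :
    decayBound d m α β := by
  refine statement6_general d m (by lia) α β ?_ hβ.le
  linarith
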